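/- Let d ≥ 1, γ ∈ (0,d), α ∈ (0,γ), and let k be a multi-index on ℝ^d with |k| ≤ 1 (so ∂^k is either the identity or a single first-order partial derivative). Let p_t(y) := (4πt)^{−d/2} exp(−‖y‖²/(4t)) denote the heat kernel on ℝ^d. Then there exists C > 0 such that for every measurable ℤ^d-periodic function f : ℝ^d → ℝ satisfying |f(y)| ≤ dist(y,ℤ^d)^{−γ} for all y ∉ ℤ^d, every t ∈ (0,1), and every x ∈ ℝ^d with x ∉ ℤ^d, one has ∫_{ℝ^d} |∂^k p_t(y)| · |f(x−y)| dy ≤ C t^{−(α+|k|)/2} dist(x,ℤ^d)^{α−γ}. In particular the same bound holds for |(∂^k P_t f)(x)|, where P_t f := p_t * f is the heat semigroup applied to f. -/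

import Mathlib

/-!
Trading powers of `‖y‖² / t` against the Gaussian gives, for `t ≤ 1` and every `r`,
`|∂^k p_t(y)| ≲ t^{-(α+k)/2} ‖y‖^{-(d-α)} (1 + ‖y‖)^{-r}`. It remains to convolve the singularity
`‖y‖^{-a}`, `a = d - α`, with `dist(·, ℤ^d)^{-b}`, `b = γ`. Put `ρ = dist(x, ℤ^d) / 2`. Of the two
distances `‖y‖` and `dist(x - y, ℤ^d)` the larger is at least `ρ`, so the product of the powers is
at most a sum of two terms, each depending on one distance only and of the form
`s^{-a} max(s, ρ)^{-b}`. By scaling, the integral of this radial profile is a multiple of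
`ρ^{d-a-b} = ρ^{α-γ}`. The second term is unfolded over the lattice, where the separation of the
lattice points and the decay `(1 + ‖y‖)^{-r}` with `r > d` make the sum converge uniformly.
-/

noncomputable section
open MeasureTheory

/-- The lattice `ℤ^d ⊆ ℝ^d`. -/
def intLat (d : ℕ) : Set (EuclideanSpace ℝ (Fin d)) :=
  Set.range fun m : Fin d → ℤ =>
    ((WithLp.equiv 2 (Fin d → ℝ)).symm fun i => (m i : ℝ))

/-- The heat kernel `p_t(y) = (4πt)^{−d/2} exp(−‖y‖²/(4t))` on `ℝ^d`. -/
def heatKer (d : ℕ) (t : ℝ) (y : EuclideanSpace ℝ (Fin d)) : ℝ :=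
  (4 * Real.pi * t) ^ (-(d : ℝ) / 2) * Real.exp (-‖y‖ ^ 2 / (4 * t))

/-- `∂^k p_t` for a multi-index `k` with `|k| ≤ 1`, encoded by `j : Option (Fin d)`:
`j = none` is the identity (`|k| = 0`) and `j = some i` is `∂_i` (`|k| = 1`). -/
def heatKerD (d : ℕ) (j : Option (Fin d)) (t : ℝ) : EuclideanSpace ℝ (Fin d) → ℝ :=
  match j with
  | none => heatKer d t
  | some i => fun y => fderiv ℝ (heatKer d t) y (EuclideanSpace.single i 1)

open Module Metric
open scoped ENNReal

section TwoScalePow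

/-- The radial profile `s ↦ s^{-a} max(s, ρ)^{-b}`: of order `s^{-a}` below the scale `ρ` and equal
to `s^{-a-b}` above it. -/
def twoScalePow (a b ρ s : ℝ) : ℝ := s ^ (-a) * max s ρ ^ (-b)

variable {a b ρ s : ℝ}

lemma twoScalePow_nonneg (hs : 0 ≤ s) : 0 ≤ twoScalePow a b ρ s :=
  mul_nonneg (Real.rpow_nonneg hs _) (Real.rpow_nonneg (le_max_of_le_left hs) _)

@[fun_prop]
lemma measurable_twoScalePow : Measurable (twoScalePow a b ρ) := by
  unfold twoScalePow
  fun_prop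

lemma twoScalePow_mul (hρ : 0 < ρ) (hs : 0 ≤ s) :
    twoScalePow a b ρ (ρ * s) = ρ ^ (-a - b) * twoScalePow a b 1 s := by
  have hmax : max (ρ * s) ρ = ρ * max s 1 := by rw [mul_max_of_nonneg _ _ hρ.le, mul_one]
  rw [twoScalePow, twoScalePow, hmax, Real.mul_rpow hρ.le hs, Real.mul_rpow hρ.le (by positivity),
    sub_eq_add_neg, Real.rpow_add hρ]
  ring

-- The larger of `s` and `u` is at least `ρ`, hence dominates `max · ρ` of the smaller one.
lemma rpow_mul_rpow_le_twoScalePow_add {u : ℝ} (ha : 0 ≤ a) (hb : 0 ≤ b) (hρ : 0 < ρ)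
    (hs : 0 ≤ s) (hu : 0 ≤ u) (h : 2 * ρ ≤ s + u) :
    s ^ (-a) * u ^ (-b) ≤ twoScalePow a b ρ s + twoScalePow b a ρ u := by
  rcases le_total s u with hsu | hus
  · have hmax : u ^ (-b) ≤ max s ρ ^ (-b) :=
      Real.rpow_le_rpow_of_nonpos (lt_max_of_lt_right hρ) (max_le hsu (by linarith)) (by linarith)
    calc s ^ (-a) * u ^ (-b) ≤ twoScalePow a b ρ s := by unfold twoScalePow; gcongr
      _ ≤ _ := le_add_of_nonneg_right (twoScalePow_nonneg hu)
  · have hmax : s ^ (-a) ≤ max u ρ ^ (-a) :=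
      Real.rpow_le_rpow_of_nonpos (lt_max_of_lt_right hρ) (max_le hus (by linarith)) (by linarith)
    calc s ^ (-a) * u ^ (-b) ≤ twoScalePow b a ρ u := by
          rw [twoScalePow, mul_comm]; gcongr
      _ ≤ _ := le_add_of_nonneg_left (twoScalePow_nonneg hs)

end TwoScalePow

lemma countable_of_pairwise_le_dist {X : Type*} [PseudoMetricSpace X] [SecondCountableTopology X]
    {s : Set X} {δ : ℝ} (hδ : 0 < δ) (hs : s.Pairwise fun x y => δ ≤ dist x y) : s.Countable := by
  have : DiscreteTopology s := .of_forall_le_dist hδ fun x y hxy =>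
    hs x.2 y.2 (Subtype.coe_ne_coe.2 hxy)
  exact Set.countable_coe_iff.1 countable_of_Lindelof_of_discrete

lemma rpow_mul_mul_infDist_rpow_le {E : Type*} [SeminormedAddCommGroup E] {Λ : Set E} {x y : E}
    {a b ρ w : ℝ} (ha : 0 ≤ a) (hb : 0 ≤ b) (hρ : 0 < ρ) (hx : 2 * ρ ≤ infDist x Λ) (hw : 0 ≤ w)
    (hw1 : w ≤ 1) :
    ‖y‖ ^ (-a) * w * infDist (x - y) Λ ^ (-b) ≤
      twoScalePow a b ρ ‖y‖ + w * twoScalePow b a ρ (infDist (x - y) Λ) := by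
  have htri : infDist x Λ ≤ ‖y‖ + infDist (x - y) Λ := by
    simpa [dist_eq_norm, add_comm] using
      infDist_le_infDist_add_dist (s := Λ) (x := x) (y := x - y)
  calc ‖y‖ ^ (-a) * w * infDist (x - y) Λ ^ (-b)
      = w * (‖y‖ ^ (-a) * infDist (x - y) Λ ^ (-b)) := by ring
    _ ≤ w * (twoScalePow a b ρ ‖y‖ + twoScalePow b a ρ (infDist (x - y) Λ)) := by
        gcongr
        exact rpow_mul_rpow_le_twoScalePow_add ha hb hρ (norm_nonneg y) infDist_nonneg
          (hx.trans htri)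
    _ ≤ twoScalePow a b ρ ‖y‖ + w * twoScalePow b a ρ (infDist (x - y) Λ) := by
        rw [mul_add]
        gcongr
        exact mul_le_of_le_one_left (twoScalePow_nonneg (norm_nonneg y)) hw1

section NormedSpace

variable {E : Type*} [NormedAddCommGroup E] [NormedSpace ℝ E] [FiniteDimensional ℝ E]
  [MeasurableSpace E] [BorelSpace E] (μ : Measure E) [μ.IsAddHaarMeasure] {a b ρ : ℝ}

lemma integrable_twoScalePow_norm [Nontrivial E] (ha : a < finrank ℝ E)
    (hab : finrank ℝ E < a + b) (hρ : 0 < ρ) :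
    Integrable (fun y : E => twoScalePow a b ρ ‖y‖) μ := by
  have hdim : ((finrank ℝ E - 1 : ℕ) : ℝ) = finrank ℝ E - 1 :=
    Nat.cast_pred finrank_pos
  rw [integrable_fun_norm_addHaar μ (f := twoScalePow a b ρ), ← Set.Ioc_union_Ioi_eq_Ioi hρ.le]
  refine IntegrableOn.union ?_ ?_
  · have hpow : IntegrableOn (fun s : ℝ => s ^ ((finrank ℝ E : ℝ) - 1 - a)) (Set.Ioc 0 ρ) :=
      (intervalIntegrable_iff_integrableOn_Ioc_of_le hρ.le).1
        (intervalIntegral.intervalIntegrable_rpow' (by linarith))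
    refine IntegrableOn.congr_fun (hpow.mul_const (ρ ^ (-b))) (fun s hs => ?_) measurableSet_Ioc
    simp only [twoScalePow, smul_eq_mul, max_eq_right hs.2]
    rw [← Real.rpow_natCast, hdim, sub_eq_add_neg _ a, Real.rpow_add hs.1, mul_assoc]
  · have hpow : IntegrableOn (fun s : ℝ => s ^ ((finrank ℝ E : ℝ) - 1 - a - b)) (Set.Ioi ρ) :=
      integrableOn_Ioi_rpow_of_lt (by linarith) hρ
    refine hpow.congr_fun (fun s hs => ?_) measurableSet_Ioi
    rw [Set.mem_Ioi] at hs
    have hs0 : 0 < s := hρ.trans hs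
    simp only [twoScalePow, smul_eq_mul, max_eq_left hs.le]
    rw [← Real.rpow_natCast, hdim, sub_eq_add_neg _ b, sub_eq_add_neg _ a, Real.rpow_add hs0,
      Real.rpow_add hs0, mul_assoc]

lemma integral_twoScalePow_norm (hρ : 0 < ρ) :
    ∫ y : E, twoScalePow a b ρ ‖y‖ ∂μ =
      ρ ^ (finrank ℝ E - a - b) * ∫ y : E, twoScalePow a b 1 ‖y‖ ∂μ := by
  have hscale (y : E) :
      twoScalePow a b ρ ‖y‖ = ρ ^ (-a - b) * twoScalePow a b 1 ‖ρ⁻¹ • y‖ := by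
    rw [← twoScalePow_mul hρ (norm_nonneg _), norm_smul, Real.norm_of_nonneg (by positivity),
      mul_inv_cancel_left₀ hρ.ne']
  simp only [hscale]
  rw [integral_const_mul, Measure.integral_comp_inv_smul_of_nonneg μ
    (fun y : E => twoScalePow a b 1 ‖y‖) hρ.le, smul_eq_mul, ← mul_assoc,
    ← Real.rpow_add_natCast hρ.ne']
  congr 2
  ring

lemma lintegral_twoScalePow_norm [Nontrivial E] (ha : a < finrank ℝ E)
    (hab : finrank ℝ E < a + b) (hρ : 0 < ρ) :
    ∫⁻ y : E, ENNReal.ofReal (twoScalePow a b ρ ‖y‖) ∂μ =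
      ENNReal.ofReal (ρ ^ (finrank ℝ E - a - b)) *
        ENNReal.ofReal (∫ y : E, twoScalePow a b 1 ‖y‖ ∂μ) := by
  rw [← ofReal_integral_eq_lintegral_ofReal (integrable_twoScalePow_norm μ ha hab hρ)
    (.of_forall fun y => twoScalePow_nonneg (norm_nonneg y)), integral_twoScalePow_norm μ hρ,
    ENNReal.ofReal_mul (by positivity)]

variable {Λ : Set E} {δ r : ℝ}

lemma measure_ball_mul_tsum_le_lintegral (hδ : 0 < δ) (hΛ : Λ.Pairwise fun m n => δ ≤ dist m n)
    {φ ψ : E → ℝ≥0∞} (h : ∀ m ∈ Λ, ∀ z ∈ ball m (δ / 2), φ m ≤ ψ z) :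
    μ (ball 0 (δ / 2)) * ∑' m : Λ, φ m ≤ ∫⁻ z, ψ z ∂μ := by
  have : Countable Λ := (countable_of_pairwise_le_dist hδ hΛ).to_subtype
  have hdisj : Pairwise fun m n : Λ => Disjoint (ball (m : E) (δ / 2)) (ball (n : E) (δ / 2)) :=
    fun m n hmn => ball_disjoint_ball <| by
      simpa using hΛ m.2 n.2 (Subtype.coe_ne_coe.2 hmn)
  calc μ (ball 0 (δ / 2)) * ∑' m : Λ, φ m
      = ∑' m : Λ, ∫⁻ _ in ball (m : E) (δ / 2), φ m ∂μ := by
        simp only [setLIntegral_const, Measure.addHaar_ball_center]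
        rw [ENNReal.tsum_mul_right, mul_comm]
    _ ≤ ∑' m : Λ, ∫⁻ z in ball (m : E) (δ / 2), ψ z ∂μ :=
        ENNReal.tsum_le_tsum fun m => setLIntegral_mono' measurableSet_ball (h m m.2)
    _ = ∫⁻ z in ⋃ m : Λ, ball (m : E) (δ / 2), ψ z ∂μ :=
        (lintegral_iUnion (fun _ => measurableSet_ball) hdisj _).symm
    _ ≤ ∫⁻ z, ψ z ∂μ := setLIntegral_le_lintegral _ _

omit [MeasurableSpace E] [BorelSpace E] in
lemma exists_tsum_one_add_norm_sub_rpow_le (hδ : 0 < δ)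
    (hΛ : Λ.Pairwise fun m n => δ ≤ dist m n) (hr : finrank ℝ E < r) :
    ∃ S : ℝ≥0∞, S ≠ ⊤ ∧
      ∀ v : E, ∑' m : Λ, ENNReal.ofReal ((1 + ‖v - m‖) ^ (-r)) ≤ S := by
  borelize E
  let μ : Measure E := Measure.addHaar
  have hr0 : 0 ≤ r := (Nat.cast_nonneg _).trans hr.le
  have hV : μ (ball (0 : E) (δ / 2)) ≠ 0 := (measure_ball_pos μ _ (half_pos hδ)).ne'
  have hV' : μ (ball (0 : E) (δ / 2)) ≠ ⊤ := measure_ball_lt_top.ne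
  set I : ℝ≥0∞ := ENNReal.ofReal ((1 + δ / 2) ^ r) *
    ∫⁻ z : E, ENNReal.ofReal ((1 + ‖z‖) ^ (-r)) ∂μ with hI
  have hI_top : I ≠ ⊤ :=
    ENNReal.mul_ne_top ENNReal.ofReal_ne_top (finite_integral_one_add_norm hr).ne
  refine ⟨I / μ (ball 0 (δ / 2)), ENNReal.div_ne_top hI_top hV, fun v => ?_⟩
  rw [ENNReal.le_div_iff_mul_le (.inl hV) (.inl hV'), mul_comm, hI,
    ← lintegral_sub_left_eq_self (fun z => ENNReal.ofReal ((1 + ‖z‖) ^ (-r))) v,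
    ← lintegral_const_mul' _ _ ENNReal.ofReal_ne_top]
  refine measure_ball_mul_tsum_le_lintegral μ hδ hΛ
    (φ := fun m => ENNReal.ofReal ((1 + ‖v - m‖) ^ (-r))) fun m _ z hz => ?_
  rw [← ENNReal.ofReal_mul (by positivity)]
  refine ENNReal.ofReal_le_ofReal ?_
  have hz' : ‖z - m‖ ≤ δ / 2 := (mem_ball_iff_norm.1 hz).le
  have hcomparable : 1 + ‖v - z‖ ≤ (1 + δ / 2) * (1 + ‖v - m‖) := by
    nlinarith [norm_sub_le_norm_sub_add_norm_sub v m z, norm_sub_rev m z, norm_nonneg (v - m)]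
  rw [Real.rpow_neg (by positivity), Real.rpow_neg (by positivity), ← div_eq_mul_inv,
    inv_le_iff_one_le_mul₀ (by positivity), div_mul_eq_mul_div, one_le_div (by positivity),
    ← Real.mul_rpow (by positivity) (by positivity)]
  exact Real.rpow_le_rpow (by positivity) hcomparable hr0

lemma lintegral_mul_comp_infDist_le (hΛ_count : Λ.Countable) (hΛ_closed : IsClosed Λ)
    (hΛ_ne : Λ.Nonempty) {w : E → ℝ≥0∞} (hw : Measurable w) {S : ℝ≥0∞}
    (hS : ∀ v, ∑' m : Λ, w (v - m) ≤ S) {g : ℝ → ℝ≥0∞} (hg : Measurable g) (x : E) :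
    ∫⁻ y, w y * g (infDist (x - y) Λ) ∂μ ≤ S * ∫⁻ z, g ‖z‖ ∂μ := by
  have : Countable Λ := hΛ_count.to_subtype
  calc ∫⁻ y, w y * g (infDist (x - y) Λ) ∂μ
      ≤ ∫⁻ y, ∑' m : Λ, w y * g ‖x - m - y‖ ∂μ := by
        refine lintegral_mono fun y => ?_
        obtain ⟨m, hm, hdist⟩ := hΛ_closed.exists_infDist_eq_dist hΛ_ne (x - y)
        rw [hdist, dist_eq_norm, sub_right_comm]
        exact ENNReal.le_tsum (f := fun m : Λ => w y * g ‖x - m - y‖) ⟨m, hm⟩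
    _ = ∑' m : Λ, ∫⁻ y, w y * g ‖x - m - y‖ ∂μ := lintegral_tsum fun m => by fun_prop
    _ = ∑' m : Λ, ∫⁻ z, w (x - z - m) * g ‖z‖ ∂μ := by
        refine tsum_congr fun m => ?_
        rw [← lintegral_sub_left_eq_self (fun z => w (x - z - m) * g ‖z‖) (x - (m : E))]
        simp only [sub_right_comm x _ (m : E), sub_sub_cancel]
    _ = ∫⁻ z, ∑' m : Λ, w (x - z - m) * g ‖z‖ ∂μ :=
        (lintegral_tsum fun m => by fun_prop).symm
    _ ≤ ∫⁻ z, S * g ‖z‖ ∂μ := by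
        refine lintegral_mono fun z => ?_
        rw [ENNReal.tsum_mul_right]
        gcongr
        exact hS (x - z)
    _ = S * ∫⁻ z, g ‖z‖ ∂μ := lintegral_const_mul _ (by fun_prop)

lemma exists_lintegral_mul_twoScalePow_infDist_le [Nontrivial E] (ha : a < finrank ℝ E)
    (hab : finrank ℝ E < a + b) (hr : finrank ℝ E < r) (hδ : 0 < δ)
    (hΛ : Λ.Pairwise fun m n => δ ≤ dist m n) (hΛ_ne : Λ.Nonempty) :
    ∃ K : ℝ≥0∞, K ≠ ⊤ ∧ ∀ ρ, 0 < ρ → ∀ x : E,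
      ∫⁻ y, ENNReal.ofReal ((1 + ‖y‖) ^ (-r)) *
          ENNReal.ofReal (twoScalePow a b ρ (infDist (x - y) Λ)) ∂μ ≤
        ENNReal.ofReal (ρ ^ (finrank ℝ E - a - b)) * K := by
  obtain ⟨S, hS_top, hS⟩ := exists_tsum_one_add_norm_sub_rpow_le hδ hΛ hr
  refine ⟨S * ENNReal.ofReal (∫ y : E, twoScalePow a b 1 ‖y‖ ∂μ),
    ENNReal.mul_ne_top hS_top ENNReal.ofReal_ne_top, fun ρ hρ x => ?_⟩
  rw [mul_left_comm, ← lintegral_twoScalePow_norm μ ha hab hρ]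
  exact lintegral_mul_comp_infDist_le μ (countable_of_pairwise_le_dist hδ hΛ)
    (isClosed_of_pairwise_le_dist hδ hΛ) hΛ_ne (by fun_prop) hS
    (g := fun s => ENNReal.ofReal (twoScalePow a b ρ s)) (by fun_prop) x

lemma exists_lintegral_rpow_mul_infDist_rpow_le (ha : a < finrank ℝ E) (hb : b < finrank ℝ E)
    (hab : finrank ℝ E < a + b) (hr : finrank ℝ E < r) (hδ : 0 < δ)
    (hΛ : Λ.Pairwise fun m n => δ ≤ dist m n) (hΛ_ne : Λ.Nonempty) :
    ∃ C : ℝ, 0 < C ∧ ∀ x ∉ Λ,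
      ∫⁻ y, ENNReal.ofReal (‖y‖ ^ (-a) * (1 + ‖y‖) ^ (-r) * infDist (x - y) Λ ^ (-b)) ∂μ ≤
        ENNReal.ofReal (C * infDist x Λ ^ (finrank ℝ E - a - b)) := by
  have ha0 : 0 ≤ a := by linarith
  have hr0 : 0 ≤ r := (Nat.cast_nonneg _).trans hr.le
  have : Nontrivial E := nontrivial_of_finrank_pos (R := ℝ) (by exact_mod_cast ha0.trans_lt ha)
  obtain ⟨K, hK_top, hK⟩ := exists_lintegral_mul_twoScalePow_infDist_le μ hb
    (by rwa [add_comm]) hr hδ hΛ hΛ_ne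
  set e : ℝ := finrank ℝ E - a - b
  set I := ENNReal.ofReal (∫ y : E, twoScalePow a b 1 ‖y‖ ∂μ)
  have hIK : I + K ≠ ⊤ := ENNReal.add_ne_top.2 ⟨ENNReal.ofReal_ne_top, hK_top⟩
  refine ⟨(1 / 2) ^ e * ((I + K).toReal + 1), by positivity, fun x hx => ?_⟩
  set D := infDist x Λ
  have hD : 0 < D :=
    ((isClosed_of_pairwise_le_dist hδ hΛ).notMem_iff_infDist_pos hΛ_ne).1 hx
  have hpoint (y : E) := rpow_mul_mul_infDist_rpow_le (Λ := Λ) (x := x) (y := y) ha0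
    (by linarith : 0 ≤ b) (half_pos hD) (mul_div_cancel₀ D two_ne_zero).le
    (by positivity : 0 ≤ (1 + ‖y‖) ^ (-r))
    (Real.rpow_le_one_of_one_le_of_nonpos (by simp) (neg_nonpos.2 hr0))
  calc ∫⁻ y, ENNReal.ofReal (‖y‖ ^ (-a) * (1 + ‖y‖) ^ (-r) * infDist (x - y) Λ ^ (-b)) ∂μ
      ≤ ∫⁻ y, ENNReal.ofReal (twoScalePow a b (D / 2) ‖y‖) + ENNReal.ofReal ((1 + ‖y‖) ^ (-r)) *
          ENNReal.ofReal (twoScalePow b a (D / 2) (infDist (x - y) Λ)) ∂μ := by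
        refine lintegral_mono fun y => (ENNReal.ofReal_le_ofReal (hpoint y)).trans ?_
        rw [← ENNReal.ofReal_mul (by positivity)]
        exact ENNReal.ofReal_add_le
    _ ≤ ENNReal.ofReal ((D / 2) ^ e) * I + ENNReal.ofReal ((D / 2) ^ e) * K := by
        rw [lintegral_add_left (by fun_prop), lintegral_twoScalePow_norm μ ha hab (half_pos hD)]
        gcongr
        simpa only [e, sub_right_comm] using hK _ (half_pos hD) x
    _ = ENNReal.ofReal ((1 / 2) ^ e * (I + K).toReal * D ^ e) := by
        rw [← mul_add, ← ENNReal.ofReal_toReal hIK, ENNReal.toReal_ofReal (by positivity),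
          ← ENNReal.ofReal_mul (by positivity), div_eq_inv_mul, ← one_div,
          Real.mul_rpow (by positivity) hD.le, mul_right_comm]
    _ ≤ ENNReal.ofReal ((1 / 2) ^ e * ((I + K).toReal + 1) * D ^ e) := by
        gcongr
        exact le_add_of_nonneg_right zero_le_one

lemma exists_lintegral_mul_comp_sub_le (ha : a < finrank ℝ E) (hb : b < finrank ℝ E)
    (hab : finrank ℝ E < a + b) (hr : finrank ℝ E < r) (hδ : 0 < δ)
    (hΛ : Λ.Pairwise fun m n => δ ≤ dist m n) (hΛ_ne : Λ.Nonempty) :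
    ∃ C : ℝ, 0 < C ∧ ∀ A, 0 ≤ A → ∀ p f : E → ℝ,
      (∀ y, y ≠ 0 → |p y| ≤ A * (‖y‖ ^ (-a) * (1 + ‖y‖) ^ (-r))) →
      (∀ y ∉ Λ, |f y| ≤ infDist y Λ ^ (-b)) → ∀ x ∉ Λ,
        ∫⁻ y, ENNReal.ofReal (|p y| * |f (x - y)|) ∂μ ≤
          ENNReal.ofReal (C * A * infDist x Λ ^ (finrank ℝ E - a - b)) := by
  have : Nontrivial E :=
    nontrivial_of_finrank_pos (R := ℝ) (by exact_mod_cast (by linarith : 0 < (finrank ℝ E : ℝ)))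
  obtain ⟨C, hC, hconv⟩ := exists_lintegral_rpow_mul_infDist_rpow_le μ ha hb hab hr hδ hΛ hΛ_ne
  refine ⟨C, hC, fun A hA p f hp hf x hx => ?_⟩
  have hae : ∀ᵐ y ∂μ, y ≠ 0 ∧ x - y ∉ Λ :=
    (Measure.ae_ne μ 0).and
      (((countable_of_pairwise_le_dist hδ hΛ).preimage sub_right_injective).ae_notMem μ)
  calc ∫⁻ y, ENNReal.ofReal (|p y| * |f (x - y)|) ∂μ
      ≤ ∫⁻ y, ENNReal.ofReal A * ENNReal.ofReal
          (‖y‖ ^ (-a) * (1 + ‖y‖) ^ (-r) * infDist (x - y) Λ ^ (-b)) ∂μ := by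
        refine lintegral_mono_ae (hae.mono fun y ⟨hy, hxy⟩ => ?_)
        rw [← ENNReal.ofReal_mul hA, ← mul_assoc]
        gcongr
        exacts [hp y hy, hf _ hxy]
    _ ≤ ENNReal.ofReal A * ENNReal.ofReal (C * infDist x Λ ^ (finrank ℝ E - a - b)) := by
        rw [lintegral_const_mul' _ _ ENNReal.ofReal_ne_top]
        gcongr
        exact hconv x hx
    _ = ENNReal.ofReal (C * A * infDist x Λ ^ (finrank ℝ E - a - b)) := by
        rw [← ENNReal.ofReal_mul hA, mul_left_comm, mul_assoc]

end NormedSpace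

section HeatKernel

lemma rpow_le_mul_exp {p c w : ℝ} (hp : 0 < p) (hc : 0 < c) (hw : 0 ≤ w) :
    w ^ p ≤ (p / c) ^ p * Real.exp (c * w) := by
  have hlin : c * w / p ≤ Real.exp (c * w / p) :=
    (le_add_of_nonneg_right zero_le_one).trans (Real.add_one_le_exp _)
  calc w ^ p = (p / c) ^ p * (c * w / p) ^ p := by
        rw [← Real.mul_rpow (by positivity) (by positivity)]
        congr 1
        field_simp
    _ ≤ (p / c) ^ p * Real.exp (c * w / p) ^ p := by gcongr
    _ = (p / c) ^ p * Real.exp (c * w) := by rw [← Real.exp_mul, div_mul_cancel₀ _ hp.ne']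

lemma exists_rpow_mul_exp_neg_le {β r : ℝ} (hβ : 0 ≤ β) (hr : 0 < r) :
    ∃ C : ℝ, 0 < C ∧ ∀ s q : ℝ, 0 ≤ s → s ^ 2 ≤ q →
      q ^ (β / 2) * Real.exp (-q / 4) ≤ C * (1 + s) ^ (-r) := by
  set p := β / 2 + r / 2 with hp
  have hp_pos : 0 < p := by positivity
  refine ⟨(p / (1 / 8)) ^ p * Real.exp (1 / 4), by positivity, fun s q hs hq => ?_⟩
  have hq0 : 0 ≤ q := (sq_nonneg s).trans hq
  have hone_add : (1 + s) ^ r ≤ (2 * (1 + q)) ^ (r / 2) := by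
    rw [show (1 + s) ^ r = ((1 + s) ^ 2) ^ (r / 2) by
      rw [← Real.rpow_natCast_mul (by positivity)]; congr 1; push_cast; ring]
    gcongr
    nlinarith [sq_nonneg (s - 1)]
  rw [Real.rpow_neg (by positivity), ← div_eq_mul_inv, le_div_iff₀ (by positivity)]
  calc q ^ (β / 2) * Real.exp (-q / 4) * (1 + s) ^ r
      ≤ (2 * (1 + q)) ^ (β / 2) * Real.exp (-q / 4) * (2 * (1 + q)) ^ (r / 2) := by
        gcongr
        linarith
    _ = (2 * (1 + q)) ^ p * Real.exp (-q / 4) := by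
        rw [hp, Real.rpow_add (by positivity)]
        ring
    _ ≤ (p / (1 / 8)) ^ p * Real.exp (1 / 8 * (2 * (1 + q))) * Real.exp (-q / 4) := by
        gcongr
        exact rpow_le_mul_exp hp_pos (by norm_num) (by positivity)
    _ = (p / (1 / 8)) ^ p * Real.exp (1 / 4) := by
        rw [mul_assoc, ← Real.exp_add]
        congr 2
        ring

lemma rpow_mul_div_rpow_eq {s t : ℝ} (hs : 0 < s) (ht : 0 < t) (n α k : ℝ) :
    t ^ (-n / 2) * (s / t) ^ k =
      t ^ (-(α + k) / 2) * s ^ (-(n - α)) * (s ^ 2 / t) ^ ((n - α + k) / 2) := by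
  obtain ⟨σ, rfl⟩ : ∃ σ, Real.exp σ = s := ⟨_, Real.exp_log hs⟩
  obtain ⟨τ, rfl⟩ : ∃ τ, Real.exp τ = t := ⟨_, Real.exp_log ht⟩
  simp only [← Real.exp_sub, ← Real.exp_nat_mul, ← Real.exp_mul, ← Real.exp_add]
  congr 1
  push_cast
  ring

variable {d : ℕ} {t : ℝ}

lemma heatKer_nonneg (ht : 0 ≤ t) (y : EuclideanSpace ℝ (Fin d)) : 0 ≤ heatKer d t y := by
  unfold heatKer
  positivity

lemma fderiv_heatKer_single (ht : t ≠ 0) (y : EuclideanSpace ℝ (Fin d)) (i : Fin d) :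
    fderiv ℝ (heatKer d t) y (EuclideanSpace.single i 1) = -(y i / (2 * t)) * heatKer d t y := by
  have hderiv : HasFDerivAt (heatKer d t) _ y :=
    (((hasStrictFDerivAt_norm_sq y).hasFDerivAt.neg.mul_const (4 * t)⁻¹).exp.const_mul
      ((4 * Real.pi * t) ^ (-(d : ℝ) / 2)))
  rw [hderiv.fderiv]
  simp only [heatKer, div_eq_mul_inv]
  simp [EuclideanSpace.inner_single_right]
  field_simp
  ring

lemma continuous_heatKer : Continuous (heatKer d t) := by
  unfold heatKer
  fun_prop

lemma continuous_heatKerD (ht : t ≠ 0) (j : Option (Fin d)) : Continuous (heatKerD d j t) := by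
  rcases j with _ | i
  · exact continuous_heatKer
  · simp only [heatKerD, fderiv_heatKer_single ht]
    have := continuous_heatKer (d := d) (t := t)
    fun_prop

lemma abs_heatKerD_le (ht : 0 < t) (j : Option (Fin d)) (y : EuclideanSpace ℝ (Fin d)) :
    |heatKerD d j t y| ≤ (‖y‖ / t) ^ (if j.isSome then (1 : ℝ) else 0) * heatKer d t y := by
  have hnonneg := heatKer_nonneg ht.le y
  rcases j with _ | i
  · simp [heatKerD, abs_of_nonneg hnonneg]
  · have hcoord : |y i| ≤ ‖y‖ := PiLp.norm_apply_le y i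
    simp only [heatKerD, fderiv_heatKer_single ht.ne', Option.isSome_some, if_true, Real.rpow_one,
      abs_mul, abs_neg, abs_div, abs_two, abs_of_pos ht, abs_of_nonneg hnonneg]
    gcongr
    linarith

lemma exists_rpow_mul_heatKer_le {α k r : ℝ} (hαk : α ≤ d + k) (hr : 0 < r) :
    ∃ C : ℝ, 0 < C ∧ ∀ t ∈ Set.Ioc (0 : ℝ) 1, ∀ y : EuclideanSpace ℝ (Fin d), y ≠ 0 →
      (‖y‖ / t) ^ k * heatKer d t y ≤
        C * t ^ (-(α + k) / 2) * (‖y‖ ^ (-(d - α)) * (1 + ‖y‖) ^ (-r)) := by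
  obtain ⟨B, hB, hdecay⟩ :=
    exists_rpow_mul_exp_neg_le (by linarith : 0 ≤ d - α + k) hr
  refine ⟨(4 * Real.pi) ^ (-(d : ℝ) / 2) * B, by positivity, fun t ⟨ht, ht1⟩ y hy => ?_⟩
  set s := ‖y‖
  have hs : 0 < s := norm_pos_iff.2 hy
  have hsq : s ^ 2 ≤ s ^ 2 / t := le_div_self (sq_nonneg s) ht ht1
  calc (s / t) ^ k * heatKer d t y
      = (4 * Real.pi) ^ (-(d : ℝ) / 2) * (t ^ (-(d : ℝ) / 2) * (s / t) ^ k) *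
          Real.exp (-(s ^ 2 / t) / 4) := by
        rw [heatKer, Real.mul_rpow (by positivity) ht.le,
          show -(s ^ 2 / t) / 4 = -s ^ 2 / (4 * t) by field_simp]
        ring
    _ = (4 * Real.pi) ^ (-(d : ℝ) / 2) * (t ^ (-(α + k) / 2) * s ^ (-(d - α))) *
          ((s ^ 2 / t) ^ ((d - α + k) / 2) * Real.exp (-(s ^ 2 / t) / 4)) := by
        rw [rpow_mul_div_rpow_eq hs ht d α k]
        ring
    _ ≤ (4 * Real.pi) ^ (-(d : ℝ) / 2) * (t ^ (-(α + k) / 2) * s ^ (-(d - α))) *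
          (B * (1 + s) ^ (-r)) := by
        gcongr ?_ * ?_
        exact hdecay s _ hs.le hsq
    _ = _ := by ring

lemma exists_abs_heatKerD_le {α r : ℝ} (hα : α ≤ d) (hr : 0 < r) (j : Option (Fin d)) :
    ∃ C : ℝ, 0 < C ∧ ∀ t ∈ Set.Ioc (0 : ℝ) 1, ∀ y : EuclideanSpace ℝ (Fin d), y ≠ 0 →
      |heatKerD d j t y| ≤ C * t ^ (-(α + if j.isSome then (1 : ℝ) else 0) / 2) *
        (‖y‖ ^ (-(d - α)) * (1 + ‖y‖) ^ (-r)) := by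
  have hα' : α ≤ d + if j.isSome then (1 : ℝ) else 0 := hα.trans (by split_ifs <;> simp)
  obtain ⟨C, hC, hker⟩ := exists_rpow_mul_heatKer_le hα' hr
  exact ⟨C, hC, fun t ht y hy => (abs_heatKerD_le ht.1 j y).trans (hker t ht y hy)⟩

end HeatKernel

section Lattice

variable {d : ℕ}

lemma intLat_nonempty : (intLat d).Nonempty := Set.range_nonempty _

lemma intLat_pairwise_one_le_dist : (intLat d).Pairwise fun x y => 1 ≤ dist x y := by
  rintro _ ⟨m, rfl⟩ _ ⟨n, rfl⟩ hmn
  obtain ⟨i, hi⟩ := Function.ne_iff.1 (ne_of_apply_ne _ hmn)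
  refine le_trans ?_ (PiLp.dist_apply_le _ _ i)
  simpa [Int.dist_cast_real] using Int.pairwise_one_le_dist (Int.cast_injective.ne_iff.1 hi)

end Lattice

theorem stmt_4_general {d : ℕ} {γ α δ : ℝ} (hγ : γ < d) (hα : α ∈ Set.Ioo 0 γ)
    (j : Option (Fin d)) {Λ : Set (EuclideanSpace ℝ (Fin d))} (hδ : 0 < δ)
    (hΛ : Λ.Pairwise fun m n => δ ≤ dist m n) (hΛ_ne : Λ.Nonempty) :
    ∃ C : ℝ, 0 < C ∧
      ∀ f : EuclideanSpace ℝ (Fin d) → ℝ, AEStronglyMeasurable f →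
        (∀ y ∉ Λ, |f y| ≤ infDist y Λ ^ (-γ)) →
        ∀ t ∈ Set.Ioc (0 : ℝ) 1, ∀ x ∉ Λ,
          Integrable (fun y => heatKerD d j t y * f (x - y)) ∧
            ∫⁻ y, ENNReal.ofReal (|heatKerD d j t y| * |f (x - y)|) ≤
              ENNReal.ofReal (C * t ^ (-(α + if j.isSome then (1 : ℝ) else 0) / 2) *
                infDist x Λ ^ (α - γ)) ∧
            |∫ y, heatKerD d j t y * f (x - y)| ≤
              C * t ^ (-(α + if j.isSome then (1 : ℝ) else 0) / 2) * infDist x Λ ^ (α - γ) := by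
  obtain ⟨hα0, hαγ⟩ := hα
  obtain ⟨C₁, hC₁, hker⟩ :=
    exists_abs_heatKerD_le (hαγ.trans hγ).le (by positivity : (0 : ℝ) < d + 1) j
  obtain ⟨C₂, hC₂, hconv⟩ := exists_lintegral_mul_comp_sub_le (a := d - α) (b := γ) (r := d + 1)
    (volume : Measure (EuclideanSpace ℝ (Fin d))) (by simpa) (by simpa) (by simp; linarith)
    (by simp) hδ hΛ hΛ_ne
  refine ⟨C₂ * C₁, by positivity, fun f hf hfΛ t ht x hx => ?_⟩
  have ht0 : 0 < t := ht.1
  have hdist : 0 ≤ infDist x Λ := infDist_nonneg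
  have hbound := hconv _ (by positivity) _ f (hker t ht) hfΛ x hx
  simp only [finrank_euclideanSpace_fin, sub_sub_cancel, ← mul_assoc] at hbound
  have hmeas : AEStronglyMeasurable (fun y => heatKerD d j t y * f (x - y)) :=
    (continuous_heatKerD ht0.ne' j).aestronglyMeasurable.mul
      (hf.comp_quasiMeasurePreserving (quasiMeasurePreserving_sub_left volume x))
  have hnorm := hbound
  simp only [← Real.norm_eq_abs, ← norm_mul] at hnorm
  refine ⟨⟨hmeas, ?_⟩, hbound, ?_⟩
  · rw [hasFiniteIntegral_iff_norm]
    exact hnorm.trans_lt ENNReal.ofReal_lt_top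
  · exact (norm_integral_le_lintegral_norm _).trans
      (ENNReal.toReal_le_of_le_ofReal (by positivity) hnorm)

theorem stmt_4 (d : ℕ) (hd : 1 ≤ d) (γ α : ℝ)
    (hγ : γ ∈ Set.Ioo (0 : ℝ) (d : ℝ)) (hα : α ∈ Set.Ioo (0 : ℝ) γ)
    (j : Option (Fin d)) :
    ∃ C : ℝ, 0 < C ∧
      ∀ f : EuclideanSpace ℝ (Fin d) → ℝ, Measurable f →
        (∀ (m : Fin d → ℤ) (y : EuclideanSpace ℝ (Fin d)),
          f (y + (WithLp.equiv 2 (Fin d → ℝ)).symm fun i => (m i : ℝ)) = f y) →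
        (∀ y : EuclideanSpace ℝ (Fin d), y ∉ intLat d →
          |f y| ≤ Metric.infDist y (intLat d) ^ (-γ)) →
        ∀ t ∈ Set.Ioo (0 : ℝ) 1, ∀ x : EuclideanSpace ℝ (Fin d), x ∉ intLat d →
          (∫⁻ y, ENNReal.ofReal (|heatKerD d j t y| * |f (x - y)|))
              ≤ ENNReal.ofReal
                (C * t ^ (-(α + if j.isSome then (1:ℝ) else 0) / 2) *
                  Metric.infDist x (intLat d) ^ (α - γ)) ∧
            |∫ y, heatKerD d j t y * f (x - y)| ≤
              C * t ^ (-(α + if j.isSome then (1:ℝ) else 0) / 2) *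
                Metric.infDist x (intLat d) ^ (α - γ) := by
  obtain ⟨C, hC, h⟩ := stmt_4_general hγ.2 hα j one_pos intLat_pairwise_one_le_dist intLat_nonempty
  exact ⟨C, hC, fun f hf _ hfΛ t ht x hx =>
    (h f hf.aestronglyMeasurable hfΛ t (Set.Ioo_subset_Ioc_self ht) x hx).2⟩
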